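/- The following identity holds: (6√15/π³) · ∑'_{(m,k)} [ 1/(m² + 15k²)² − 1/(3m² + 5k²)² + 1/(2m² + mk + 2k²)² − 1/(m² + mk + 4k²)² ] = (8/5)·d_3, where d_3 = (3√3/(4π))·L(χ_{-3},2). -/

import Mathlib

/-- The quadratic Dirichlet character modulo 3:
`χ₋₃(n) = 1` if `n ≡ 1 (mod 3)`, `-1` if `n ≡ 2 (mod 3)`, `0` if `3 ∣ n`. -/
def chiNeg3 (n : ℕ) : ℝ :=
  if n % 3 = 1 then 1 else if n % 3 = 2 then -1 else 0

/-- `d₃ = (3√3/(4π)) · L(χ₋₃, 2)`. -/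
noncomputable def d3 : ℝ :=
  (3 * Real.sqrt 3 / (4 * Real.pi)) * ∑' n : ℕ, chiNeg3 (n + 1) / ((n : ℝ) + 1) ^ 2


def qf (a b c : ℤ) (v : ℤ × ℤ) : ℤ := a * v.1 ^ 2 + b * v.1 * v.2 + c * v.2 ^ 2

noncomputable def R (a b c n : ℤ) : ℕ := {v : ℤ × ℤ | qf a b c v = n}.ncard

lemma qf_finite (a b c n : ℤ) (_ha : 0 < a) (_hc : 0 < c) (hD : 0 < 4 * a * c - b ^ 2) :
    {v : ℤ × ℤ | qf a b c v = n}.Finite := by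
  apply ((Set.finite_Icc (-(4 * c * n)) (4 * c * n)).prod
    (Set.finite_Icc (-(4 * a * n)) (4 * a * n))).subset
  rintro ⟨x, y⟩ h
  simp only [Set.mem_ofPred_eq, qf] at h
  have h1 : y ^ 2 ≤ 4 * a * n := by
    have : 4 * a * n = (2 * a * x + b * y) ^ 2 + (4 * a * c - b ^ 2) * y ^ 2 := by
      rw [← h]; ring
    nlinarith [sq_nonneg (2 * a * x + b * y), sq_nonneg y]
  have h2 : x ^ 2 ≤ 4 * c * n := by
    have : 4 * c * n = (2 * c * y + b * x) ^ 2 + (4 * a * c - b ^ 2) * x ^ 2 := by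
      rw [← h]; ring
    nlinarith [sq_nonneg (2 * c * y + b * x), sq_nonneg x]
  have h3 : |y| ≤ y ^ 2 := by rw [← sq_abs]; nlinarith [abs_nonneg y, Int.natCast_natAbs y, Int.le_self_sq |y|]
  have h4 : |x| ≤ x ^ 2 := by rw [← sq_abs]; nlinarith [Int.le_self_sq |x|]
  simp only [Set.mem_prod, Set.mem_Icc]
  exact ⟨abs_le.1 (h4.trans h2), abs_le.1 (h3.trans h1)⟩

lemma R_congr (a b c a' b' c' n : ℤ) (e : ℤ × ℤ ≃ ℤ × ℤ)
    (h : ∀ v, qf a b c (e v) = qf a' b' c' v) : R a b c n = R a' b' c' n := by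
  unfold R
  have : {v : ℤ × ℤ | qf a b c v = n} = e '' {v : ℤ × ℤ | qf a' b' c' v = n} := by
    ext v
    simp only [Set.mem_ofPred_eq, Set.mem_image]
    constructor
    · intro hv
      exact ⟨e.symm v, by rw [← h]; simpa using hv, by simp⟩
    · rintro ⟨w, hw, rfl⟩
      rw [h]; exact hw
  rw [this, Set.ncard_image_of_injective _ e.injective]

/-- genus condition -/
def Genus (a b c e : ℤ) : Prop :=
  (∀ v, (jacobiSym (qf a b c v) 5 = 0 ∨ jacobiSym (qf a b c v) 5 = e) ∧
    (jacobiSym (qf a b c v) 3 = 0 ∨ jacobiSym (qf a b c v) 3 = e)) ∧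
  (∃ v, jacobiSym (qf a b c v) 5 = e ∧ jacobiSym (qf a b c v) 3 = e)

lemma Genus_congr (a b c a' b' c' ε : ℤ) (e : ℤ × ℤ ≃ ℤ × ℤ)
    (h : ∀ v, qf a b c (e v) = qf a' b' c' v) (hg : Genus a' b' c' ε) : Genus a b c ε := by
  refine ⟨fun v => ?_, ?_⟩
  · have := hg.1 (e.symm v)
    rw [← h] at this; simpa using this
  · obtain ⟨v, hv⟩ := hg.2
    exact ⟨e v, by rw [h]; exact hv⟩

lemma j5 (n : ℤ) : jacobiSym n 5 = if n % 5 = 1 ∨ n % 5 = 4 then 1 else if n % 5 = 0 then 0 else -1 := by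
  rw [jacobiSym.mod_left]
  have h1 := Int.emod_nonneg n (show (5:ℤ) ≠ 0 by norm_num)
  have h2 := Int.emod_lt_of_pos n (show (0:ℤ) < 5 by norm_num)
  push_cast
  generalize n % 5 = m at *
  interval_cases m <;> norm_num

lemma j3 (n : ℤ) : jacobiSym n 3 = if n % 3 = 1 then 1 else if n % 3 = 2 then -1 else 0 := by
  rw [jacobiSym.mod_left]
  have h1 := Int.emod_nonneg n (show (3:ℤ) ≠ 0 by norm_num)
  have h2 := Int.emod_lt_of_pos n (show (0:ℤ) < 3 by norm_num)
  push_cast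
  generalize n % 3 = m at *
  interval_cases m <;> norm_num

lemma genus1 : Genus 1 1 4 1 := by
  refine ⟨fun v => ⟨?_, ?_⟩, (1, 0), by norm_num [qf], by norm_num [qf]⟩
  · rw [jacobiSym.mod_left, qf]
    have h : ∀ x y : ZMod 5, 1 * x ^ 2 + 1 * x * y + 4 * y ^ 2 = 0 ∨ 1 * x ^ 2 + 1 * x * y + 4 * y ^ 2 = 1
      ∨ 1 * x ^ 2 + 1 * x * y + 4 * y ^ 2 = 4 := by decide
    have h' := h v.1 v.2
    have : ((1 * v.1 ^ 2 + 1 * v.1 * v.2 + 4 * v.2 ^ 2) % 5 = 0 ∨ (1 * v.1 ^ 2 + 1 * v.1 * v.2 + 4 * v.2 ^ 2) % 5 = 1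
       ∨ (1 * v.1 ^ 2 + 1 * v.1 * v.2 + 4 * v.2 ^ 2) % 5 = 4) := by
      have e0 := (ZMod.intCast_eq_intCast_iff' (1 * v.1 ^ 2 + 1 * v.1 * v.2 + 4 * v.2 ^ 2) 0 5)
      have e1 := (ZMod.intCast_eq_intCast_iff' (1 * v.1 ^ 2 + 1 * v.1 * v.2 + 4 * v.2 ^ 2) 1 5)
      have e4 := (ZMod.intCast_eq_intCast_iff' (1 * v.1 ^ 2 + 1 * v.1 * v.2 + 4 * v.2 ^ 2) 4 5)
      push_cast at e0 e1 e4
      rw [e0, e1, e4] at h'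
      simpa using h'
    push_cast
    rcases this with h | h | h <;> rw [h] <;> norm_num
  · rw [jacobiSym.mod_left, qf]
    have h : ∀ x y : ZMod 3, 1 * x ^ 2 + 1 * x * y + 4 * y ^ 2 = 0 ∨ 1 * x ^ 2 + 1 * x * y + 4 * y ^ 2 = 1 := by decide
    have h' := h v.1 v.2
    have : ((1 * v.1 ^ 2 + 1 * v.1 * v.2 + 4 * v.2 ^ 2) % 3 = 0 ∨ (1 * v.1 ^ 2 + 1 * v.1 * v.2 + 4 * v.2 ^ 2) % 3 = 1) := by
      have e0 := (ZMod.intCast_eq_intCast_iff' (1 * v.1 ^ 2 + 1 * v.1 * v.2 + 4 * v.2 ^ 2) 0 3)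
      have e1 := (ZMod.intCast_eq_intCast_iff' (1 * v.1 ^ 2 + 1 * v.1 * v.2 + 4 * v.2 ^ 2) 1 3)
      push_cast at e0 e1
      rw [e0, e1] at h'
      simpa using h'
    push_cast
    rcases this with h | h <;> rw [h] <;> norm_num

lemma genus2 : Genus 2 1 2 (-1) := by
  refine ⟨fun v => ⟨?_, ?_⟩, (1, 0), by norm_num [qf], by norm_num [qf]⟩
  · rw [jacobiSym.mod_left, qf]
    have h : ∀ x y : ZMod 5, 2 * x ^ 2 + 1 * x * y + 2 * y ^ 2 = 0 ∨ 2 * x ^ 2 + 1 * x * y + 2 * y ^ 2 = 2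
      ∨ 2 * x ^ 2 + 1 * x * y + 2 * y ^ 2 = 3 := by decide
    have h' := h v.1 v.2
    have : ((2 * v.1 ^ 2 + 1 * v.1 * v.2 + 2 * v.2 ^ 2) % 5 = 0 ∨ (2 * v.1 ^ 2 + 1 * v.1 * v.2 + 2 * v.2 ^ 2) % 5 = 2
       ∨ (2 * v.1 ^ 2 + 1 * v.1 * v.2 + 2 * v.2 ^ 2) % 5 = 3) := by
      have e0 := (ZMod.intCast_eq_intCast_iff' (2 * v.1 ^ 2 + 1 * v.1 * v.2 + 2 * v.2 ^ 2) 0 5)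
      have e1 := (ZMod.intCast_eq_intCast_iff' (2 * v.1 ^ 2 + 1 * v.1 * v.2 + 2 * v.2 ^ 2) 2 5)
      have e4 := (ZMod.intCast_eq_intCast_iff' (2 * v.1 ^ 2 + 1 * v.1 * v.2 + 2 * v.2 ^ 2) 3 5)
      push_cast at e0 e1 e4
      rw [e0, e1, e4] at h'
      simpa using h'
    push_cast
    rcases this with h | h | h <;> rw [h] <;> norm_num
  · rw [jacobiSym.mod_left, qf]
    have h : ∀ x y : ZMod 3, 2 * x ^ 2 + 1 * x * y + 2 * y ^ 2 = 0 ∨ 2 * x ^ 2 + 1 * x * y + 2 * y ^ 2 = 2 := by decide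
    have h' := h v.1 v.2
    have : ((2 * v.1 ^ 2 + 1 * v.1 * v.2 + 2 * v.2 ^ 2) % 3 = 0 ∨ (2 * v.1 ^ 2 + 1 * v.1 * v.2 + 2 * v.2 ^ 2) % 3 = 2) := by
      have e0 := (ZMod.intCast_eq_intCast_iff' (2 * v.1 ^ 2 + 1 * v.1 * v.2 + 2 * v.2 ^ 2) 0 3)
      have e1 := (ZMod.intCast_eq_intCast_iff' (2 * v.1 ^ 2 + 1 * v.1 * v.2 + 2 * v.2 ^ 2) 2 3)
      push_cast at e0 e1
      rw [e0, e1] at h'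
      simpa using h'
    push_cast
    rcases this with h | h <;> rw [h] <;> norm_num

noncomputable def RR (e n : ℤ) : ℕ := if e = 1 then R 1 1 4 n else R 2 1 2 n

/-- Every positive form of discriminant `-15` is one of the two classes. -/
def Cls (a b c : ℤ) : Prop :=
  ∃ e : ℤ, (e = 1 ∨ e = -1) ∧ (∀ n, R a b c n = RR e n) ∧ Genus a b c e

lemma Cls_congr (a b c a' b' c' : ℤ) (e : ℤ × ℤ ≃ ℤ × ℤ)
    (h : ∀ v, qf a b c (e v) = qf a' b' c' v) (hg : Cls a' b' c') : Cls a b c := by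
  obtain ⟨ε, hε, hg⟩ := hg
  exact ⟨ε, hε, fun n => (R_congr _ _ _ _ _ _ n e h).trans (hg.1 n),
      Genus_congr _ _ _ _ _ _ _ e h hg.2⟩

def shX (k : ℤ) : ℤ × ℤ ≃ ℤ × ℤ where
  toFun v := (v.1 + k * v.2, v.2)
  invFun v := (v.1 - k * v.2, v.2)
  left_inv v := by ext <;> simp
  right_inv v := by ext <;> simp

def shY (k : ℤ) : ℤ × ℤ ≃ ℤ × ℤ where
  toFun v := (v.1, v.2 + k * v.1)
  invFun v := (v.1, v.2 - k * v.1)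
  left_inv v := by ext <;> simp
  right_inv v := by ext <;> simp

def negX : ℤ × ℤ ≃ ℤ × ℤ where
  toFun v := (-v.1, v.2)
  invFun v := (-v.1, v.2)
  left_inv v := by ext <;> simp
  right_inv v := by ext <;> simp

lemma cls (N : ℕ) : ∀ a b c : ℤ, 0 < a → 0 < c → b ^ 2 - 4 * a * c = -15 → a + c ≤ N → Cls a b c := by
  induction N with
  | zero => intro a b c ha hc _ h; simp at h; omega
  | succ N ih =>
    intro a b c ha hc hd hN
    push_cast at hN
    have pos : ∀ x y z : ℤ, 0 < x → y ^ 2 - 4 * x * z = -15 → 0 < z := by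
      intro x y z hx h
      by_contra hz
      nlinarith [sq_nonneg y, mul_nonneg hx.le (sub_nonneg.2 (not_lt.1 hz))]
    by_cases h1 : a < b
    · refine Cls_congr a b c a (b - 2 * a) (a - b + c) (shX (-1)) (fun v => by simp [qf, shX]; ring) ?_
      have hd' : (b - 2 * a) ^ 2 - 4 * a * (a - b + c) = -15 := by rw [← hd]; ring
      exact ih _ _ _ ha (pos _ _ _ ha hd') hd' (by omega)
    by_cases h2 : b < -a
    · refine Cls_congr a b c a (b + 2 * a) (a + b + c) (shX 1) (fun v => by simp [qf, shX]; ring) ?_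
      have hd' : (b + 2 * a) ^ 2 - 4 * a * (a + b + c) = -15 := by rw [← hd]; ring
      exact ih _ _ _ ha (pos _ _ _ ha hd') hd' (by omega)
    by_cases h3 : c < b
    · refine Cls_congr a b c (a - b + c) (b - 2 * c) c (shY (-1)) (fun v => by simp [qf, shY]; ring) ?_
      have hd' : (b - 2 * c) ^ 2 - 4 * c * (a - b + c) = -15 := by rw [← hd]; ring
      exact ih _ _ _ (pos _ _ _ hc hd') hc (by rw [← hd]; ring) (by omega)
    by_cases h4 : b < -c
    · refine Cls_congr a b c (a + b + c) (b + 2 * c) c (shY 1) (fun v => by simp [qf, shY]; ring) ?_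
      have hd' : (b + 2 * c) ^ 2 - 4 * c * (a + b + c) = -15 := by rw [← hd]; ring
      exact ih _ _ _ (pos _ _ _ hc hd') hc (by rw [← hd]; ring) (by omega)
    have hab : b ^ 2 ≤ a * c := by
      rcases le_total 0 b with hb | hb <;> nlinarith
    have hac : a * c ≤ 5 := by nlinarith
    have ha5 : a ≤ 5 := by nlinarith
    have hc5 : c ≤ 5 := by nlinarith
    have hb2 : b ≤ 2 := by nlinarith
    have hb3 : -2 ≤ b := by nlinarith
    have c1 : Cls 1 1 4 := ⟨1, by simp, fun _ => by simp [RR], genus1⟩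
    have c2 : Cls 2 1 2 := ⟨-1, by simp, fun _ => by simp [RR], genus2⟩
    have c3 : Cls 4 1 1 := Cls_congr 4 1 1 1 1 4 (Equiv.prodComm ℤ ℤ) (fun v => by simp [qf]; ring) c1
    have neg : ∀ x y, Cls x 1 y → Cls x (-1) y := fun x y h =>
      Cls_congr x (-1) y x 1 y negX (fun v => by simp [qf, negX]) h
    have hb1 : b = 1 ∨ b = -1 := by
      interval_cases b <;> first | omega | skip
      all_goals exfalso; ring_nf at hd; omega
    have hac4 : a * c = 4 := by rcases hb1 with rfl | rfl <;> linarith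
    have hfin : (a = 1 ∧ c = 4) ∨ (a = 2 ∧ c = 2) ∨ (a = 4 ∧ c = 1) := by
      interval_cases a <;> omega
    rcases hb1 with rfl | rfl
    · rcases hfin with ⟨rfl, rfl⟩ | ⟨rfl, rfl⟩ | ⟨rfl, rfl⟩
      · exact c1
      · exact c2
      · exact c3
    · apply neg
      rcases hfin with ⟨rfl, rfl⟩ | ⟨rfl, rfl⟩ | ⟨rfl, rfl⟩
      · exact c1
      · exact c2
      · exact c3

lemma cls' (a b c : ℤ) (ha : 0 < a) (hd : b ^ 2 - 4 * a * c = -15) : Cls a b c := by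
  have hc : 0 < c := by
    by_contra hz
    nlinarith [sq_nonneg b, mul_nonneg ha.le (sub_nonneg.2 (not_lt.1 hz))]
  exact cls (a + c).toNat a b c ha hc hd (by omega)

lemma fib (a b c s p t n : ℤ) (hp : p ≠ 0) (hs : a * s ^ 2 + b * s + c = p * t) :
    {v : ℤ × ℤ | qf a b c v = p * n ∧ p ∣ v.1 - s * v.2}.ncard = R (a * p) (2 * a * s + b) t n := by
  have : {v : ℤ × ℤ | qf a b c v = p * n ∧ p ∣ v.1 - s * v.2} =
      (fun w : ℤ × ℤ => (s * w.2 + p * w.1, w.2)) '' {v | qf (a * p) (2 * a * s + b) t v = n} := by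
    have key : ∀ z y, qf a b c (s * y + p * z, y) = p * qf (a * p) (2 * a * s + b) t (z, y) := by
      intro z y
      simp only [qf]
      linear_combination y ^ 2 * hs
    ext ⟨x, y⟩
    simp only [Set.mem_ofPred_eq, Set.mem_image, Prod.mk.injEq, Prod.exists]
    constructor
    · rintro ⟨h1, z, hz⟩
      obtain rfl : x = s * y + p * z := by linarith
      rw [key] at h1
      exact ⟨z, y, mul_left_cancel₀ hp h1, rfl, rfl⟩
    · rintro ⟨z, y', h, rfl, rfl⟩
      rw [key, h]
      exact ⟨rfl, z, by ring⟩
  rw [this, Set.ncard_image_of_injective, R]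
  rintro ⟨z, y⟩ ⟨z', y'⟩ h
  simp only [Prod.mk.injEq] at h
  obtain ⟨h1, rfl⟩ := h
  have := mul_left_cancel₀ hp (add_left_cancel h1)
  rw [this]

lemma fibp (a b c p n : ℤ) (hp : p ≠ 0) :
    {v : ℤ × ℤ | qf a b c v = p * n ∧ p ∣ v.1 ∧ p ∣ v.2}.ncard =
      if p ∣ n then R a b c (n / p) else 0 := by
  have key : ∀ z y, qf a b c (p * z, p * y) = p * (p * qf a b c (z, y)) := by
    intro z y
    simp only [qf]
    ring
  split_ifs with hn
  · obtain ⟨m, rfl⟩ := hn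
    rw [Int.mul_ediv_cancel_left _ hp]
    have : {v : ℤ × ℤ | qf a b c v = p * (p * m) ∧ p ∣ v.1 ∧ p ∣ v.2} =
        (fun w : ℤ × ℤ => (p * w.1, p * w.2)) '' {v | qf a b c v = m} := by
      ext ⟨x, y⟩
      simp only [Set.mem_ofPred_eq, Set.mem_image, Prod.mk.injEq, Prod.exists]
      constructor
      · rintro ⟨h1, ⟨z, rfl⟩, ⟨w, rfl⟩⟩
        rw [key] at h1
        exact ⟨z, w, mul_left_cancel₀ hp (mul_left_cancel₀ hp h1), rfl, rfl⟩
      · rintro ⟨z, y', h, rfl, rfl⟩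
        rw [key, h]
        exact ⟨rfl, ⟨z, rfl⟩, ⟨y', rfl⟩⟩
    rw [this, Set.ncard_image_of_injective, R]
    rintro ⟨z, y⟩ ⟨z', y'⟩ h
    simp only [Prod.mk.injEq] at h
    rw [mul_left_cancel₀ hp h.1, mul_left_cancel₀ hp h.2]
  · have : {v : ℤ × ℤ | qf a b c v = p * n ∧ p ∣ v.1 ∧ p ∣ v.2} = ∅ := by
      ext ⟨x, y⟩
      simp only [Set.mem_ofPred_eq, Set.mem_empty_iff_false, iff_false]
      rintro ⟨h1, ⟨z, rfl⟩, ⟨w, rfl⟩⟩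
      rw [key] at h1
      exact hn ⟨_, (mul_left_cancel₀ hp h1).symm⟩
    rw [this, Set.ncard_empty]

lemma split_count (a b c s s' k p t t' n : ℤ) (hp : Prime p) (ha : 0 < a) (hc : 0 < c)
    (hd : b ^ 2 - 4 * a * c = -15)
    (hpa : ¬ p ∣ a) (hs : a * s ^ 2 + b * s + c = p * t) (hs' : a * s' ^ 2 + b * s' + c = p * t')
    (hk : a * (s + s') + b = p * k) (hns : ¬ p ∣ 2 * a * s + b) :
    R a b c (p * n) + (if p ∣ n then R a b c (n / p) else 0) =
      R (a * p) (2 * a * s + b) t n + R (a * p) (2 * a * s' + b) t' n := by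
  rw [← fib a b c s p t n hp.ne_zero hs, ← fib a b c s' p t' n hp.ne_zero hs',
    ← fibp a b c p n hp.ne_zero]
  have hfin := qf_finite a b c (p * n) ha hc (by linarith)
  rw [← Set.ncard_union_add_ncard_inter _ _ (hfin.subset fun v h => h.1) (hfin.subset fun v h => h.1)]
  unfold R
  congr 1
  · congr 1
    ext ⟨x, y⟩
    simp only [Set.mem_ofPred_eq, Set.mem_union]
    constructor
    · intro h
      have h1 : p ∣ (x - s * y) * (a * (x - s' * y)) := by
        refine ⟨n - y ^ 2 * t - (x - s * y) * k * y, ?_⟩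
        simp only [qf] at h
        linear_combination h - y ^ 2 * hs - (x - s * y) * y * hk
      rcases hp.dvd_or_dvd h1 with h2 | h2
      · exact Or.inl ⟨h, h2⟩
      · exact Or.inr ⟨h, (hp.dvd_or_dvd h2).resolve_left hpa⟩
    · rintro (h | h) <;> exact h.1
  · congr 1
    ext ⟨x, y⟩
    simp only [Set.mem_ofPred_eq, Set.mem_inter_iff]
    constructor
    · rintro ⟨h, hx, hy⟩
      exact ⟨⟨h, dvd_sub hx (hy.mul_left _)⟩, h, dvd_sub hx (hy.mul_left _)⟩
    · rintro ⟨⟨h, h1⟩, -, h2⟩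
      have h3 : p ∣ (2 * a * s + b) * y := by
        have : (2 * a * s + b) * y = p * (k * y) + a * ((x - s' * y) - (x - s * y)) := by
          linear_combination y * hk
        rw [this]
        exact dvd_add (Dvd.intro _ rfl) ((dvd_sub h2 h1).mul_left _)
      have hy := (hp.dvd_or_dvd h3).resolve_left hns
      refine ⟨h, ?_, hy⟩
      have := dvd_add h1 (hy.mul_left s)
      simpa using this

/-- class of the derived form -/
lemma derived (a b c s p t e : ℤ) (hp : 0 < p) (ha : 0 < a)
    (hd : b ^ 2 - 4 * a * c = -15) (he : e = 1 ∨ e = -1) (hg : Genus a b c e)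
    (hs : a * s ^ 2 + b * s + c = p * t) (h5 : jacobiSym p 5 ≠ 0) (h3 : jacobiSym p 3 ≠ 0) (n : ℤ) :
    R (a * p) (2 * a * s + b) t n = RR (e * jacobiSym p 5) n ∧ jacobiSym p 5 = jacobiSym p 3 := by
  obtain ⟨δ, hδ, hR, hG⟩ := cls' (a * p) (2 * a * s + b) t (by positivity)
    (by linear_combination hd + 4 * a * hs)
  obtain ⟨⟨z, y⟩, hv5, hv3⟩ := hG.2
  have key : qf a b c (s * y + p * z, y) = p * qf (a * p) (2 * a * s + b) t (z, y) := by
      simp only [qf]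
      linear_combination y ^ 2 * hs
  have := hg.1 (s * y + p * z, y)
  rw [key, jacobiSym.mul_left, jacobiSym.mul_left, hv5, hv3] at this
  have hδ0 : δ ≠ 0 := by rcases hδ with rfl | rfl <;> norm_num
  have e5 : jacobiSym p 5 * δ = e := this.1.resolve_left (mul_ne_zero h5 hδ0)
  have e3 : jacobiSym p 3 * δ = e := this.2.resolve_left (mul_ne_zero h3 hδ0)
  refine ⟨?_, mul_right_cancel₀ hδ0 (e5.trans e3.symm)⟩
  rw [hR]
  congr 1
  have hJ : jacobiSym p 5 ^ 2 = 1 := by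
    rcases jacobiSym.trichotomy p 5 with h | h | h
    · exact absurd h h5
    · rw [h]; norm_num
    · rw [h]; norm_num
  rw [← e5]
  linear_combination -δ * hJ

lemma R332 (n : ℤ) : R 3 3 2 n = R 2 1 2 n :=
  R_congr _ _ _ _ _ _ _ (negX.trans (shY (-1))) (fun v => by simp [qf, negX, shY]; ring)
lemma G332 : Genus 3 3 2 (-1) :=
  Genus_congr _ _ _ _ _ _ _ (negX.trans (shY (-1))) (fun v => by simp [qf, negX, shY]; ring) genus2
lemma R552 (n : ℤ) : R 5 5 2 n = R 2 1 2 n :=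
  R_congr _ _ _ _ _ _ _ (shY (-1)) (fun v => by simp [qf, shY]; ring)
lemma R694 (n : ℤ) : R 6 9 4 n = R 1 1 4 n :=
  R_congr _ _ _ _ _ _ _ (shY (-1)) (fun v => by simp [qf, shY]; ring)
lemma R1051 (n : ℤ) : R 10 5 1 n = R 1 1 4 n :=
  R_congr _ _ _ _ _ _ _ ((Equiv.prodComm ℤ ℤ).trans (shY (-2))) (fun v => by simp [qf, shY]; ring)

lemma split_RR (a b c s p t e : ℤ) (hp : Prime p) (hp0 : 0 < p) (ha : 0 < a) (hc : 0 < c)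
    (hd : b ^ 2 - 4 * a * c = -15) (he : e = 1 ∨ e = -1) (hg : Genus a b c e)
    (hR : ∀ n, R a b c n = RR e n) (hpa : ¬ p ∣ a)
    (hs : a * s ^ 2 + b * s + c = p * t) (h5 : jacobiSym p 5 ≠ 0) (h3 : jacobiSym p 3 ≠ 0)
    (h15 : ¬ p ∣ 15) (n : ℤ) :
    RR e (p * n) + (if p ∣ n then RR e (n / p) else 0) = 2 * RR (e * jacobiSym p 5) n ∧
      jacobiSym p 5 = jacobiSym p 3 := by
  have hcop : IsCoprime p a := (Prime.coprime_iff_not_dvd hp).2 hpa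
  obtain ⟨u, w, huw⟩ := hcop
  -- w * a ≡ 1
  have hk : a * (s + (-s - w * b)) + b = p * (u * b) := by linear_combination -b * huw
  have hs' : ∃ t', a * (-s - w * b) ^ 2 + b * (-s - w * b) + c = p * t' := by
    refine ⟨t + u * b * (-2 * s - w * b), ?_⟩
    linear_combination hs - b * (-2 * s - w * b) * huw
  obtain ⟨t', hs'⟩ := hs'
  have hns : ¬ p ∣ 2 * a * s + b := by
    intro h
    apply h15
    have : (15 : ℤ) = p * (4 * a * t) - (2 * a * s + b) * (2 * a * s + b) := by
      linear_combination hd + 4 * a * hs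
    rw [this]
    exact dvd_sub (Dvd.intro _ rfl) (h.mul_left _)
  have := split_count a b c s _ _ p t t' n hp ha hc hd hpa hs hs' hk hns
  have d1 := derived a b c s p t e hp0 ha hd he hg hs h5 h3 n
  have d2 := derived a b c _ p t' e hp0 ha hd he hg hs' h5 h3 n
  rw [d1.1, d2.1, hR, hR] at this
  exact ⟨by rw [this]; ring, d1.2⟩

noncomputable def bb (n : ℤ) : ℤ := (R 1 1 4 n : ℤ) - R 2 1 2 n

lemma ram_count (a b c s p t n : ℤ) (hp : p ≠ 0) (hs : a * s ^ 2 + b * s + c = p * t)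
    (h : ∀ v, p ∣ qf a b c v → p ∣ v.1 - s * v.2) :
    R a b c (p * n) = R (a * p) (2 * a * s + b) t n := by
  rw [← fib a b c s p t n hp hs, R]
  congr 1
  ext v
  simp only [Set.mem_ofPred_eq]
  exact ⟨fun hv => ⟨hv, h v ⟨n, hv⟩⟩, fun hv => hv.1⟩

lemma bb3 (n : ℤ) : bb (3 * n) = - bb n := by
  have p3 : Prime (3 : ℤ) := Int.prime_three
  have h1 := ram_count 1 1 4 1 3 2 n (by norm_num) (by norm_num) (by
    rintro ⟨x, y⟩ ⟨k, hk⟩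
    simp only [qf] at hk
    refine p3.dvd_of_dvd_pow (n := 2) ⟨k - x * y - y ^ 2, ?_⟩
    linear_combination hk)
  have h2 := ram_count 2 1 2 2 3 4 n (by norm_num) (by norm_num) (by
    rintro ⟨x, y⟩ ⟨k, hk⟩
    simp only [qf] at hk
    refine p3.dvd_of_dvd_pow (n := 2) ⟨2 * k - x ^ 2 - 2 * x * y, ?_⟩
    linear_combination 2 * hk)
  norm_num at h1 h2
  unfold bb
  rw [h1, h2, R332, R694]; ring

lemma bb5 (n : ℤ) : bb (5 * n) = - bb n := by
  have p5 : Prime (5 : ℤ) := by norm_num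
  have h1 := ram_count 1 1 4 2 5 2 n (by norm_num) (by norm_num) (by
    rintro ⟨x, y⟩ ⟨k, hk⟩
    simp only [qf] at hk
    refine p5.dvd_of_dvd_pow (n := 2) ⟨k - x * y, ?_⟩
    linear_combination hk)
  have h2 := ram_count 2 1 2 1 5 1 n (by norm_num) (by norm_num) (by
    rintro ⟨x, y⟩ ⟨k, hk⟩
    simp only [qf] at hk
    refine p5.dvd_of_dvd_pow (n := 2) ⟨3 * k - x ^ 2 - x * y - y ^ 2, ?_⟩
    linear_combination 3 * hk)
  norm_num at h1 h2
  unfold bb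
  rw [h1, h2, R552, R1051]; ring

lemma inert_count (a b c p n : ℤ) (hp : Prime p) (hpa : ¬ p ∣ a)
    (hd : b ^ 2 - 4 * a * c = -15) (hw : ∀ w, ¬ p ∣ w ^ 2 + 15) :
    R a b c (p * n) = if p ∣ n then R a b c (n / p) else 0 := by
  rw [← fibp a b c p n hp.ne_zero, R]
  congr 1
  ext ⟨x, y⟩
  simp only [Set.mem_ofPred_eq]
  refine ⟨fun hv => ⟨hv, ?_⟩, fun hv => hv.1⟩
  simp only [qf] at hv
  have hy : p ∣ y := by
    by_contra hy
    obtain ⟨u, w, huw⟩ := (Prime.coprime_iff_not_dvd hp).2 hy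
    apply hw (w * (2 * a * x + b * y))
    -- (w y)^2 = (1 - u p)^2
    refine ⟨w ^ 2 * 4 * a * n + 15 * u * (2 - u * p), ?_⟩
    linear_combination w ^ 2 * 4 * a * hv + w ^ 2 * y ^ 2 * hd - 15 * (w * y + 1 - u * p) * huw
  refine ⟨?_, hy⟩
  have : p ∣ a * x ^ 2 := by
    have : a * x ^ 2 = p * n - y * (b * x + c * y) := by linear_combination hv
    rw [this]
    exact dvd_sub (Dvd.intro _ rfl) (hy.mul_right _)
  exact hp.dvd_of_dvd_pow ((hp.dvd_or_dvd this).resolve_left hpa)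

lemma bb_split (p : ℤ) (hp : Prime p) (hp0 : 0 < p) (h5 : jacobiSym p 5 ≠ 0) (h3 : jacobiSym p 3 ≠ 0)
    (h15 : ¬ p ∣ 15) (hw : p = 2 ∨ ((¬ p ∣ 2) ∧ ∃ w, p ∣ w ^ 2 + 15)) (n : ℤ) :
    bb (p * n) = (jacobiSym p 3 + jacobiSym p 5) * bb n -
      jacobiSym p 3 * jacobiSym p 5 * (if p ∣ n then bb (n / p) else 0) := by
  have rt : ∀ a b c : ℤ, b ^ 2 - 4 * a * c = -15 → ¬ p ∣ a → (¬ p ∣ 2) → (∃ w, p ∣ w ^ 2 + 15) →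
      ∃ s t, a * s ^ 2 + b * s + c = p * t := by
    rintro a b c hd ha h2 ⟨w, m, hm⟩
    have h2a : ¬ p ∣ 2 * a := fun h => (hp.dvd_or_dvd h).elim h2 ha
    obtain ⟨u, i, hi⟩ := (Prime.coprime_iff_not_dvd hp).2 h2a
    refine ⟨i * (w - b), ?_⟩
    have : p ∣ 2 * (2 * a) * (a * (i * (w - b)) ^ 2 + b * (i * (w - b)) + c) := by
      have e : 2 * (2 * a) * (a * (i * (w - b)) ^ 2 + b * (i * (w - b)) + c) =
          (2 * a * (i * (w - b)) + b) ^ 2 + 15 := by linear_combination -hd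
      have e2 : 2 * a * (i * (w - b)) + b = w - u * p * (w - b) := by
        linear_combination (w - b) * hi
      rw [e, e2]
      refine ⟨m - 2 * w * u * (w - b) + u ^ 2 * p * (w - b) ^ 2, ?_⟩
      linear_combination hm
    exact (((hp.dvd_or_dvd this).resolve_left (fun h => (hp.dvd_or_dvd h).elim h2 h2a)))
  have k1 : RR 1 (p * n) + (if p ∣ n then RR 1 (n / p) else 0) = 2 * RR (1 * jacobiSym p 5) n ∧
      jacobiSym p 5 = jacobiSym p 3 := by
    have h1 : ¬ p ∣ 1 := fun h => hp.not_unit (isUnit_of_dvd_one h)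
    have : ∃ s t, (1:ℤ) * s ^ 2 + 1 * s + 4 = p * t := by
      rcases hw with rfl | ⟨h2, hw⟩
      · exact ⟨0, 2, by norm_num⟩
      · exact rt 1 1 4 (by norm_num) h1 h2 hw
    obtain ⟨s, t, hs⟩ := this
    exact split_RR 1 1 4 s p t 1 hp hp0 (by norm_num) (by norm_num) (by norm_num) (by norm_num)
      genus1 (fun n => by simp [RR]) h1 hs h5 h3 h15 n
  have k2 : RR (-1) (p * n) + (if p ∣ n then RR (-1) (n / p) else 0) = 2 * RR (-1 * jacobiSym p 5) n ∧
      jacobiSym p 5 = jacobiSym p 3 := by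
    rcases hw with rfl | ⟨h2, hw⟩
    · exact split_RR 3 3 2 0 2 1 (-1) hp hp0 (by norm_num) (by norm_num) (by norm_num) (by norm_num)
        G332 (fun n => by simp [RR, R332]) (by norm_num) (by norm_num) h5 h3 h15 n
    · obtain ⟨s, t, hs⟩ := rt 2 1 2 (by norm_num) h2 h2 hw
      exact split_RR 2 1 2 s p t (-1) hp hp0 (by norm_num) (by norm_num) (by norm_num) (by norm_num)
        genus2 (fun n => by simp [RR]) h2 hs h5 h3 h15 n
  obtain ⟨k1, hJ⟩ := k1
  replace k2 := k2.1
  rw [← hJ]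
  have hR1 : ∀ n, RR 1 n = R 1 1 4 n := fun n => by simp [RR]
  have hR2 : ∀ n, RR (-1) n = R 2 1 2 n := fun n => by simp [RR]
  rcases jacobiSym.trichotomy p 5 with h | h | h
  · exact absurd h h5
  · rw [h] at k1 k2 ⊢
    norm_num [hR1, hR2] at k1 k2
    unfold bb
    split_ifs at k1 k2 ⊢ <;> zify at k1 k2 <;> linarith
  · rw [h] at k1 k2 ⊢
    norm_num [hR1, hR2] at k1 k2
    unfold bb
    split_ifs at k1 k2 ⊢ <;> zify at k1 k2 <;> linarith

lemma recip (p : ℕ) (hodd : Odd p) (h3 : ¬ 3 ∣ p) (h5 : ¬ 5 ∣ p) :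
    jacobiSym (-15) p = jacobiSym p 3 * jacobiSym p 5 := by
  rw [jacobiSym.mod_right _ hodd, j3, j5]
  have e : 4 * (-15 : ℤ).natAbs = 60 := rfl
  rw [e]
  have hlt : p % 60 < 60 := Nat.mod_lt _ (by norm_num)
  have e3 : (p : ℤ) % 3 = ((p % 60 : ℕ) : ℤ) % 3 := by omega
  have e5 : (p : ℤ) % 5 = ((p % 60 : ℕ) : ℤ) % 5 := by omega
  have o : (p % 60) % 2 = 1 := by have := Nat.odd_iff.1 hodd; omega
  have h3' : (p % 60) % 3 ≠ 0 := by omega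
  have h5' : (p % 60) % 5 ≠ 0 := by omega
  rw [e3, e5]
  generalize p % 60 = m at *
  clear e3 e5
  interval_cases m <;> first | omega | norm_num

lemma brec (p : ℕ) (hp : p.Prime) (n : ℤ) :
    bb (p * n) = (jacobiSym p 3 + jacobiSym p 5) * bb n -
      jacobiSym p 3 * jacobiSym p 5 * (if (p : ℤ) ∣ n then bb (n / p) else 0) := by
  have hpZ : Prime (p : ℤ) := Nat.prime_iff_prime_int.1 hp
  by_cases p3 : p = 3
  · subst p3
    have := bb3 n
    push_cast
    rw [this]; norm_num
  by_cases p5 : p = 5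
  · subst p5
    have := bb5 n
    push_cast
    rw [this]; norm_num
  have h3 : ¬ 3 ∣ p := fun h => p3 ((Nat.prime_dvd_prime_iff_eq Nat.prime_three hp).1 h).symm
  have h5 : ¬ 5 ∣ p := fun h => p5 ((Nat.prime_dvd_prime_iff_eq Nat.prime_five hp).1 h).symm
  have J3 : jacobiSym p 3 ≠ 0 := by rw [j3]; split_ifs <;> first | omega | norm_num
  have J5 : jacobiSym p 5 ≠ 0 := by rw [j5]; split_ifs <;> first | omega | norm_num
  have h15 : ¬ (p : ℤ) ∣ 15 := by
    intro h
    have h' : p ∣ 3 * 5 := by exact_mod_cast h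
    rcases (hp.dvd_mul).1 h' with h | h
    · exact p3 ((Nat.prime_dvd_prime_iff_eq hp Nat.prime_three).1 h)
    · exact p5 ((Nat.prime_dvd_prime_iff_eq hp Nat.prime_five).1 h)
  have hp0 : (0 : ℤ) < p := by exact_mod_cast hp.pos
  by_cases p2 : p = 2
  · exact bb_split p hpZ hp0 J5 J3 h15 (Or.inl (by exact_mod_cast p2)) n
  have h2 : ¬ (p : ℤ) ∣ 2 := by
    intro h
    exact p2 ((Nat.prime_dvd_prime_iff_eq hp Nat.prime_two).1 (by exact_mod_cast h))
  by_cases hw : ∃ w : ℤ, (p : ℤ) ∣ w ^ 2 + 15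
  · exact bb_split p hpZ hp0 J5 J3 h15 (Or.inr ⟨h2, hw⟩) n
  push Not at hw
  have hJ : jacobiSym p 3 * jacobiSym p 5 = -1 := by
    rw [← recip p (hp.odd_of_ne_two p2) h3 h5]
    haveI : Fact p.Prime := ⟨hp⟩
    rw [← jacobiSym.legendreSym.to_jacobiSym, legendreSym.eq_neg_one_iff]
    rintro ⟨r, hr⟩
    obtain ⟨w, rfl⟩ := ZMod.intCast_surjective r
    apply hw w
    rw [← ZMod.intCast_zmod_eq_zero_iff_dvd]
    push_cast at hr ⊢
    linear_combination -hr
  have hsum : jacobiSym p 3 + jacobiSym p 5 = 0 := by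
    rcases jacobiSym.trichotomy p 5 with h | h | h <;> rw [h] at hJ ⊢ <;> linarith
  rw [hJ, hsum]
  have h1 : ¬ (p : ℤ) ∣ 1 := fun h => hpZ.not_unit (isUnit_of_dvd_one h)
  unfold bb
  rw [inert_count 1 1 4 p n hpZ h1 (by norm_num) hw, inert_count 2 1 2 p n hpZ h2 (by norm_num) hw]
  split_ifs <;> simp

/-- the convolution -/
def gg (n : ℕ) : ℤ := ∑ d ∈ n.divisors, jacobiSym d 3 * jacobiSym (n / d : ℕ) 5

lemma grec (p n : ℕ) (hp : p.Prime) (hn : n ≠ 0) :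
    gg (p * n) = (jacobiSym p 3 + jacobiSym p 5) * gg n -
      jacobiSym p 3 * jacobiSym p 5 * (if p ∣ n then gg (n / p) else 0) := by
  have hpn : p * n ≠ 0 := mul_ne_zero hp.ne_zero hn
  have hU : (p * n).divisors = n.divisors ∪ n.divisors.image (p * ·) := by
    ext d
    simp only [Nat.mem_divisors, Finset.mem_union, Finset.mem_image]
    constructor
    · rintro ⟨h, -⟩
      by_cases hd : p ∣ d
      · obtain ⟨e, rfl⟩ := hd
        exact Or.inr ⟨e, ⟨Nat.dvd_of_mul_dvd_mul_left hp.pos h, hn⟩, rfl⟩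
      · exact Or.inl ⟨(Nat.Coprime.dvd_mul_left ((Nat.Prime.coprime_iff_not_dvd hp).2 hd).symm).1 h, hn⟩
    · rintro (⟨h, -⟩ | ⟨e, ⟨h, -⟩, rfl⟩)
      · exact ⟨h.mul_left _, hpn⟩
      · exact ⟨mul_dvd_mul_left _ h, hpn⟩
  have hui := Finset.sum_union_inter (s₁ := n.divisors) (s₂ := n.divisors.image (p * ·))
    (f := fun d : ℕ => jacobiSym d 3 * jacobiSym (p * n / d : ℕ) 5)
  rw [← hU] at hui
  have s1 : ∑ d ∈ n.divisors, jacobiSym d 3 * jacobiSym (p * n / d : ℕ) 5 = jacobiSym p 5 * gg n := by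
    rw [gg, Finset.mul_sum]
    refine Finset.sum_congr rfl fun d hd => ?_
    rw [Nat.mul_div_assoc _ (Nat.dvd_of_mem_divisors hd)]
    push_cast [jacobiSym.mul_left]
    ring
  have s2 : ∑ d ∈ n.divisors.image (p * ·), jacobiSym d 3 * jacobiSym (p * n / d : ℕ) 5
      = jacobiSym p 3 * gg n := by
    rw [gg, Finset.mul_sum, Finset.sum_image (fun x _ y _ h => Nat.eq_of_mul_eq_mul_left hp.pos h)]
    refine Finset.sum_congr rfl fun d hd => ?_
    rw [Nat.mul_div_mul_left _ _ hp.pos, Nat.cast_mul, jacobiSym.mul_left]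
    ring
  have s3 : ∑ d ∈ n.divisors ∩ n.divisors.image (p * ·), jacobiSym d 3 * jacobiSym (p * n / d : ℕ) 5
      = jacobiSym p 3 * jacobiSym p 5 * (if p ∣ n then gg (n / p) else 0) := by
    split_ifs with h
    · obtain ⟨m, rfl⟩ := h
      have hm : m ≠ 0 := by rintro rfl; simp at hn
      have : (p * m).divisors ∩ (p * m).divisors.image (p * ·) = m.divisors.image (p * ·) := by
        ext d
        simp only [Nat.mem_divisors, Finset.mem_inter, Finset.mem_image]
        constructor
        · rintro ⟨⟨h, -⟩, e, -, rfl⟩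
          exact ⟨e, ⟨Nat.dvd_of_mul_dvd_mul_left hp.pos h, hm⟩, rfl⟩
        · rintro ⟨e, ⟨h, -⟩, rfl⟩
          exact ⟨⟨mul_dvd_mul_left _ h, hn⟩, e, ⟨h.mul_left _, hn⟩, rfl⟩
      rw [this, Nat.mul_div_cancel_left _ hp.pos, gg, Finset.mul_sum,
        Finset.sum_image (fun x _ y _ h => Nat.eq_of_mul_eq_mul_left hp.pos h)]
      refine Finset.sum_congr rfl fun d hd => ?_
      rw [Nat.mul_div_mul_left _ _ hp.pos, Nat.mul_div_assoc _ (Nat.dvd_of_mem_divisors hd),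
        Nat.cast_mul, Nat.cast_mul, jacobiSym.mul_left, jacobiSym.mul_left]
      ring
    · rw [mul_zero]
      apply Finset.sum_eq_zero
      intro d hd
      simp only [Nat.mem_divisors, Finset.mem_inter, Finset.mem_image] at hd
      obtain ⟨⟨h1, -⟩, e, -, rfl⟩ := hd
      exact absurd ((Dvd.intro _ rfl).trans h1) h
  rw [s1, s2, s3] at hui
  rw [gg]
  linarith

lemma bb_one : bb 1 = 2 := by
  have h1 : {v : ℤ × ℤ | qf 1 1 4 v = 1} = {(1, 0), (-1, 0)} := by
    ext ⟨x, y⟩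
    simp only [Set.mem_ofPred_eq, qf, Set.mem_insert_iff, Set.mem_singleton_iff, Prod.mk.injEq]
    constructor
    · intro h
      have hy : y = 0 := by
        have : y ^ 2 < 1 := by nlinarith [sq_nonneg (2 * x + y)]
        nlinarith [sq_nonneg y, sq_eq_zero_iff.1 (le_antisymm (by linarith : y ^ 2 ≤ 0) (sq_nonneg y))]
      subst hy
      have : x ^ 2 = 1 := by linarith
      rcases (by simpa using this : x = 1 ∨ x = -1) with h | h <;> simp [h]
    · rintro (⟨rfl, rfl⟩ | ⟨rfl, rfl⟩) <;> norm_num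
  have h2 : {v : ℤ × ℤ | qf 2 1 2 v = 1} = ∅ := by
    ext ⟨x, y⟩
    simp only [Set.mem_ofPred_eq, qf, Set.mem_empty_iff_false, iff_false]
    intro h
    have hy : y ^ 2 < 1 := by nlinarith [sq_nonneg (4 * x + y)]
    have hx : x ^ 2 < 1 := by nlinarith [sq_nonneg (4 * y + x)]
    have hx' : x = 0 := sq_eq_zero_iff.1 (le_antisymm (by linarith : x ^ 2 ≤ 0) (sq_nonneg x))
    have hy' : y = 0 := sq_eq_zero_iff.1 (le_antisymm (by linarith : y ^ 2 ≤ 0) (sq_nonneg y))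
    subst hx' hy'
    norm_num at h
  rw [bb, R, R, h1, h2, Set.ncard_pair (by norm_num)]
  simp

lemma bb_eq (n : ℕ) (hn : n ≠ 0) : bb n = 2 * gg n := by
  induction n using Nat.strong_induction_on with
  | _ n ih =>
    by_cases h1 : n = 1
    · subst h1
      have := bb_one
      norm_num [gg, this]
    have hp := Nat.minFac_prime h1
    obtain ⟨m, hm⟩ := Nat.minFac_dvd n
    set p := n.minFac with hpdef
    have hm0 : m ≠ 0 := by rintro rfl; exact hn (by simpa using hm)
    have hlt : m < n := by rw [hm]; nlinarith [hp.two_le, Nat.pos_of_ne_zero hm0]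
    clear_value p
    subst hm
    have e1 := brec p hp m
    have e2 := grec p m hp hm0
    have e3 := ih m hlt hm0
    push_cast
    rw [e1, e2, e3]
    by_cases h : p ∣ m
    · have h' : (p : ℤ) ∣ m := by exact_mod_cast h
      rw [if_pos h, if_pos h']
      obtain ⟨k, rfl⟩ := h
      have hk : k ≠ 0 := by rintro rfl; simp at hm0
      have e4 := ih k (lt_of_le_of_lt (Nat.le_mul_of_pos_left _ hp.pos) hlt) hk
      have : (((p * k : ℕ) : ℤ) / p) = k := by
        push_cast
        exact Int.mul_ediv_cancel_left _ (by exact_mod_cast hp.ne_zero)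
      rw [this, Nat.mul_div_cancel_left _ hp.pos, e4]
      ring
    · have h' : ¬ (p : ℤ) ∣ m := by exact_mod_cast h
      rw [if_neg h, if_neg h']
      ring

lemma hs_congr {ι : Type*} {f g : ι → ℝ} {a : ℝ} (h : HasSum g a) (hfg : ∀ n, f n = g n) :
    HasSum f a := by
  rw [show f = g from funext hfg]; exact h

lemma R_map (a b c a' b' c' n n' : ℤ) (φ : ℤ × ℤ → ℤ × ℤ) (hφ : φ.Injective)
    (h : ∀ v, qf a' b' c' v = n' → qf a b c (φ v) = n)
    (hs : ∀ w, qf a b c w = n → ∃ v, qf a' b' c' v = n' ∧ φ v = w) :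
    R a b c n = R a' b' c' n' := by
  unfold R
  have : {v : ℤ × ℤ | qf a b c v = n} = φ '' {v : ℤ × ℤ | qf a' b' c' v = n'} := by
    ext v
    simp only [Set.mem_ofPred_eq, Set.mem_image]
    exact ⟨fun hv => hs v hv, by rintro ⟨w, hw, rfl⟩; exact h w hw⟩
  rw [this, Set.ncard_image_of_injective _ hφ]

noncomputable def aa (n : ℤ) : ℤ := (R 1 0 15 n : ℤ) - R 3 0 5 n

lemma even_sq (x : ℤ) : ∃ k, x ^ 2 = x + 2 * k := by
  obtain ⟨k, hk⟩ := Int.even_mul_succ_self x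
  exact ⟨k - x, by linear_combination hk⟩

lemma aa_odd (n : ℤ) (hn : n % 2 = 1) : aa n = bb n := by
  have h1 : R 1 1 4 n = R 1 0 15 n := by
    refine R_map _ _ _ _ _ _ _ _ (fun v => (v.1 - v.2, 2 * v.2)) ?_ ?_ ?_
    · rintro ⟨x, y⟩ ⟨z, w⟩ h
      simp only [Prod.mk.injEq] at h ⊢
      omega
    · rintro ⟨x, y⟩ h
      rw [← h]; simp only [qf]; ring
    · rintro ⟨x, y⟩ h
      have hy : y % 2 = 0 := by
        by_contra hy
        simp only [qf] at h
        obtain ⟨j, rfl⟩ : ∃ j, y = 2 * j + 1 := ⟨y / 2, by omega⟩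
        obtain ⟨k, hk⟩ := even_sq x
        have : n = 2 * (k + x + x * j + 2 * (2 * j + 1) ^ 2) := by linear_combination hk - h
        omega
      obtain ⟨j, rfl⟩ : ∃ j, y = 2 * j := ⟨y / 2, by omega⟩
      exact ⟨(x + j, j), by rw [← h]; simp only [qf]; ring, by simp⟩
  have h2 : R 2 1 2 n = R 3 0 5 n := by
    refine R_map _ _ _ _ _ _ _ _ (fun v => (v.2 + v.1, v.2 - v.1)) ?_ ?_ ?_
    · rintro ⟨x, y⟩ ⟨z, w⟩ h
      simp only [Prod.mk.injEq] at h ⊢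
      omega
    · rintro ⟨x, y⟩ h
      rw [← h]; simp only [qf]; ring
    · rintro ⟨x, y⟩ h
      have hy : y % 2 = 1 := by
        by_contra hy
        simp only [qf] at h
        obtain ⟨j, rfl⟩ : ∃ j, y = 2 * j := ⟨y / 2, by omega⟩
        have : n = 2 * (x ^ 2 + x * j + (2 * j) ^ 2) := by linear_combination - h
        omega
      have hx : x % 2 = 1 := by
        by_contra hy
        simp only [qf] at h
        obtain ⟨j, rfl⟩ : ∃ j, x = 2 * j := ⟨x / 2, by omega⟩
        have : n = 2 * ((2 * j) ^ 2 + y * j + y ^ 2) := by linear_combination - h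
        omega
      obtain ⟨j, rfl⟩ : ∃ j, y = 2 * j + 1 := ⟨y / 2, by omega⟩
      obtain ⟨i, rfl⟩ : ∃ j, x = 2 * j + 1 := ⟨x / 2, by omega⟩
      exact ⟨(i - j, i + j + 1), by rw [← h]; simp only [qf]; ring, by simp; constructor <;> ring⟩
  rw [aa, bb, h1, h2]

lemma par15 (x y n : ℤ) (h : qf 1 0 15 (x, y) = 2 * n) : ∃ m, x = 2 * m + y := by
  simp only [qf] at h
  obtain ⟨k, hk⟩ := even_sq x
  obtain ⟨l, hl⟩ := even_sq y
  exact ⟨(x - y) / 2, by omega⟩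

lemma par35 (x y n : ℤ) (h : qf 3 0 5 (x, y) = 2 * n) : ∃ m, x = 2 * m + y := by
  simp only [qf] at h
  obtain ⟨k, hk⟩ := even_sq x
  obtain ⟨l, hl⟩ := even_sq y
  exact ⟨(x - y) / 2, by omega⟩

lemma aa_four (n : ℤ) : aa (4 * n) = bb n := by
  have h1 : R 1 0 15 (4 * n) = R 1 1 4 n := by
    refine R_map _ _ _ _ _ _ _ _ (fun v => (2 * v.1 + v.2, v.2)) ?_ ?_ ?_
    · rintro ⟨x, y⟩ ⟨z, w⟩ h
      simp only [Prod.mk.injEq] at h ⊢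
      omega
    · rintro ⟨x, y⟩ h
      rw [← h]; simp only [qf]; ring
    · rintro ⟨x, y⟩ h
      obtain ⟨m, rfl⟩ := par15 x y (2 * n) (by rw [h]; ring)
      refine ⟨(m, y), ?_, rfl⟩
      simp only [qf] at h ⊢
      linarith
  have h2 : R 3 0 5 (4 * n) = R 3 3 2 n := by
    refine R_map _ _ _ _ _ _ _ _ (fun v => (2 * v.1 + v.2, v.2)) ?_ ?_ ?_
    · rintro ⟨x, y⟩ ⟨z, w⟩ h
      simp only [Prod.mk.injEq] at h ⊢
      omega
    · rintro ⟨x, y⟩ h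
      rw [← h]; simp only [qf]; ring
    · rintro ⟨x, y⟩ h
      obtain ⟨m, rfl⟩ := par35 x y (2 * n) (by rw [h]; ring)
      refine ⟨(m, y), ?_, rfl⟩
      simp only [qf] at h ⊢
      linarith
  rw [aa, bb, h1, h2, R332]

lemma aa_two (n : ℤ) (hn : n % 2 = 1) : aa (2 * n) = 0 := by
  have h1 : R 1 0 15 (2 * n) = 0 := by
    have : {v : ℤ × ℤ | qf 1 0 15 v = 2 * n} = ∅ := by
      ext ⟨x, y⟩
      simp only [Set.mem_ofPred_eq, Set.mem_empty_iff_false, iff_false]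
      intro h
      obtain ⟨m, rfl⟩ := par15 x y n h
      simp only [qf] at h
      have : n = 2 * (m ^ 2 + m * y + 4 * y ^ 2) := by linarith
      omega
    rw [R, this, Set.ncard_empty]
  have h2 : R 3 0 5 (2 * n) = 0 := by
    have : {v : ℤ × ℤ | qf 3 0 5 v = 2 * n} = ∅ := by
      ext ⟨x, y⟩
      simp only [Set.mem_ofPred_eq, Set.mem_empty_iff_false, iff_false]
      intro h
      obtain ⟨m, rfl⟩ := par35 x y n h
      simp only [qf] at h
      have : n = 2 * (3 * m ^ 2 + 3 * m * y + 2 * y ^ 2) := by linarith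
      omega
    rw [R, this, Set.ncard_empty]
  rw [aa, h1, h2]; simp

lemma diff_even (m : ℕ) : aa ((2 * m : ℕ) : ℤ) - bb ((2 * m : ℕ) : ℤ) =
    2 * bb m + 2 * (if 2 ∣ m then bb ((m / 2 : ℕ) : ℤ) else 0) := by
  have e := brec 2 Nat.prime_two m
  have J3 : jacobiSym ((2 : ℕ) : ℤ) 3 = -1 := by norm_num
  have J5 : jacobiSym ((2 : ℕ) : ℤ) 5 = -1 := by norm_num
  rw [J3, J5] at e
  push_cast at e ⊢
  by_cases h : 2 ∣ m
  · have h' : (2 : ℤ) ∣ m := by exact_mod_cast h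
    rw [if_pos h'] at e
    rw [if_pos h, e]
    obtain ⟨k, rfl⟩ := h
    have h4 := aa_four k
    push_cast
    rw [show (2 * (2 * (k : ℤ))) = 4 * k by ring, h4]
    rw [Int.mul_ediv_cancel_left _ (by norm_num)]
    ring
  · have h' : ¬ (2 : ℤ) ∣ m := by exact_mod_cast h
    rw [if_neg h'] at e
    rw [if_neg h, e, aa_two _ (by omega)]
    ring

noncomputable def qterm (a b c : ℤ) (v : ℤ × ℤ) : ℝ := 1 / ((qf a b c v : ℤ) : ℝ) ^ 2

lemma qf_nonneg (a b c : ℤ) (ha : 0 < a) (hD : 0 < 4 * a * c - b ^ 2) (v : ℤ × ℤ) :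
    0 ≤ qf a b c v := by
  by_contra h
  have : 4 * a * qf a b c v = (2 * a * v.1 + b * v.2) ^ 2 + (4 * a * c - b ^ 2) * v.2 ^ 2 := by
    simp only [qf]; ring
  have h2 : a * qf a b c v < 0 := mul_neg_of_pos_of_neg ha (not_le.1 h)
  have h3 : 0 ≤ (4 * a * c - b ^ 2) * v.2 ^ 2 := by positivity
  nlinarith [sq_nonneg (2 * a * v.1 + b * v.2)]

lemma qterm_summable (a b c : ℤ) (ha : 0 < a) (hc : 0 < c) (hD : 0 < 4 * a * c - b ^ 2) :
    Summable (qterm a b c) := by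
  have h := (EisensteinSeries.summable_one_div_norm_rpow (k := 4) (by norm_num))
  have h2 := (((finTwoArrowEquiv ℤ).symm.summable_iff).2 h).mul_left (((4 * (a + c) : ℤ) : ℝ) ^ 2)
  refine h2.of_nonneg_of_le (fun v => by unfold qterm; positivity) ?_
  rintro ⟨x, y⟩
  simp only [Function.comp, qterm]
  by_cases hv : x = 0 ∧ y = 0
  · obtain ⟨rfl, rfl⟩ := hv
    simp [qf]
    positivity
  set M : ℤ := max |x| |y| with hM
  have hnorm : ‖(finTwoArrowEquiv ℤ).symm (x, y)‖ = (M : ℝ) := by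
    rw [EisensteinSeries.norm_eq_max_natAbs]
    simp [hM, Nat.cast_natAbs]
  rw [hnorm]
  have hMpos : 0 < M := by
    by_cases hx : x = 0
    · exact lt_max_of_lt_right (abs_pos.2 fun h => hv ⟨hx, h⟩)
    · exact lt_max_of_lt_left (abs_pos.2 hx)
  have key : M ^ 2 ≤ 4 * (a + c) * qf a b c (x, y) := by
    have e1 : 4 * a * qf a b c (x, y) = (2 * a * x + b * y) ^ 2 + (4 * a * c - b ^ 2) * y ^ 2 := by
      simp only [qf]; ring
    have e2 : 4 * c * qf a b c (x, y) = (2 * c * y + b * x) ^ 2 + (4 * a * c - b ^ 2) * x ^ 2 := by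
      simp only [qf]; ring
    have q := qf_nonneg a b c ha hD (x, y)
    have q1 : 0 ≤ a * qf a b c (x, y) := by positivity
    have q2 : 0 ≤ c * qf a b c (x, y) := by positivity
    have y1 : y ^ 2 ≤ (4 * a * c - b ^ 2) * y ^ 2 := by nlinarith [sq_nonneg y]
    have x1 : x ^ 2 ≤ (4 * a * c - b ^ 2) * x ^ 2 := by nlinarith [sq_nonneg x]
    rcases max_choice |x| |y| with h | h <;> rw [hM, h, sq_abs] <;>
      nlinarith [sq_nonneg (2 * a * x + b * y), sq_nonneg (2 * c * y + b * x)]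
  have keyR : (M : ℝ) ^ 2 ≤ ((4 * (a + c) : ℤ) : ℝ) * (qf a b c (x, y) : ℝ) := by exact_mod_cast key
  have hMR : (0 : ℝ) < M := by exact_mod_cast hMpos
  have hA : (0 : ℝ) < ((4 * (a + c) : ℤ) : ℝ) := by
    have : 0 < 4 * (a + c) := by omega
    exact_mod_cast this
  have hq : (0 : ℝ) < (qf a b c (x, y) : ℝ) := by
    by_contra hneg
    have := mul_nonpos_of_nonneg_of_nonpos hA.le (not_lt.1 hneg)
    nlinarith [pow_pos hMR 2]
  rw [Real.rpow_neg hMR.le, show (4 : ℝ) = ((4 : ℕ) : ℝ) by norm_num, Real.rpow_natCast, ← div_eq_mul_inv,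
    div_le_div_iff₀ (by positivity) (by positivity)]
  calc 1 * (M : ℝ) ^ 4 = ((M : ℝ) ^ 2) ^ 2 := by ring
    _ ≤ _ := pow_le_pow_left₀ (by positivity) keyR 2
    _ = _ := by push_cast; ring

lemma qterm_hasSum (a b c : ℤ) (ha : 0 < a) (hc : 0 < c) (hD : 0 < 4 * a * c - b ^ 2) :
    HasSum (fun n : ℕ => (R a b c n : ℝ) / (n : ℝ) ^ 2) (∑' v, qterm a b c v) := by
  have h := (qterm_summable a b c ha hc hD).hasSum.tsum_fiberwise (fun v => (qf a b c v).natAbs)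
  refine hs_congr h (fun n => ?_)
  have hset : (fun v => (qf a b c v).natAbs) ⁻¹' {n} = {v | qf a b c v = n} := by
    ext v
    have := qf_nonneg a b c ha hD v
    simp only [Set.mem_preimage, Set.mem_singleton_iff, Set.mem_ofPred_eq]
    omega
  rw [hset]
  have : ∀ v : {v | qf a b c v = n}, qterm a b c v = 1 / (n : ℝ) ^ 2 := by
    rintro ⟨v, hv⟩
    simp only [Set.mem_ofPred_eq] at hv
    simp [qterm, hv]
  rw [tsum_congr this, tsum_const, R, Nat.card_coe_set_eq, nsmul_eq_mul]
  ring

lemma sum_subtype (a b c : ℤ) :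
    ∑' p : {p : ℤ × ℤ // p ≠ 0}, qterm a b c p.1 = ∑' v, qterm a b c v := by
  apply tsum_subtype_eq_of_support_subset (s := {p : ℤ × ℤ | p ≠ 0})
  intro v hv
  rw [Function.mem_support] at hv
  rintro rfl
  exact hv (by simp [qterm, qf])

noncomputable def SB : ℝ := ∑' n : ℕ, (bb n : ℝ) / (n : ℝ) ^ 2

lemma hasSum_bb : HasSum (fun n : ℕ => (bb n : ℝ) / (n : ℝ) ^ 2) SB := by
  have h := (qterm_hasSum 1 1 4 (by norm_num) (by norm_num) (by norm_num)).sub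
    (qterm_hasSum 2 1 2 (by norm_num) (by norm_num) (by norm_num))
  have : Summable (fun n : ℕ => (bb n : ℝ) / (n : ℝ) ^ 2) := by
    refine h.summable.congr fun n => ?_
    rw [bb]; push_cast; ring
  exact this.hasSum

lemma bb_half : HasSum (fun m : ℕ => ((if 2 ∣ m then bb ((m / 2 : ℕ) : ℤ) else 0 : ℤ) : ℝ) / (m : ℝ) ^ 2)
    (SB / 4) := by
  have hinj : Function.Injective (fun k : ℕ => 2 * k) := fun x y h => by simpa using h
  rw [← hinj.hasSum_iff]
  · refine hs_congr (hasSum_bb.div_const 4) (fun k => ?_)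
    simp only [Function.comp, dvd_mul_right, if_true]
    rw [Nat.mul_div_cancel_left _ (by norm_num)]
    push_cast
    rw [mul_pow, div_div]
    ring
  · intro x hx
    have : ¬ 2 ∣ x := by
      rintro ⟨k, rfl⟩
      exact hx ⟨k, rfl⟩
    simp [this]

lemma hasSum_diff : HasSum (fun n : ℕ => ((aa n - bb n : ℤ) : ℝ) / (n : ℝ) ^ 2) (5 / 8 * SB) := by
  have hinj : Function.Injective (fun k : ℕ => 2 * k) := fun x y h => by simpa using h
  rw [← hinj.hasSum_iff]
  · have h := (hasSum_bb.mul_left (1 / 2)).add (bb_half.mul_left (1 / 2))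
    rw [show 5 / 8 * SB = 1 / 2 * SB + 1 / 2 * (SB / 4) by ring]
    refine hs_congr h (fun k => ?_)
    · simp only [Function.comp]
      rw [diff_even]
      push_cast
      rw [mul_pow]
      rcases Nat.eq_zero_or_pos k with rfl | hk
      · simp
      · have : (k : ℝ) ≠ 0 := by positivity
        field_simp
        try ring
  · intro x hx
    have : ¬ 2 ∣ x := by
      rintro ⟨k, rfl⟩
      exact hx ⟨k, rfl⟩
    rw [aa_odd _ (by omega)]
    simp

lemma lhs_eq : (∑' p : {p : ℤ × ℤ // p ≠ 0},
          (1 / ((p.1.1 : ℝ) ^ 2 + 15 * (p.1.2 : ℝ) ^ 2) ^ 2 -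
            1 / (3 * (p.1.1 : ℝ) ^ 2 + 5 * (p.1.2 : ℝ) ^ 2) ^ 2 +
            1 / (2 * (p.1.1 : ℝ) ^ 2 + (p.1.1 : ℝ) * (p.1.2 : ℝ) + 2 * (p.1.2 : ℝ) ^ 2) ^ 2 -
            1 / ((p.1.1 : ℝ) ^ 2 + (p.1.1 : ℝ) * (p.1.2 : ℝ) + 4 * (p.1.2 : ℝ) ^ 2) ^ 2)) = 5 / 8 * SB := by
  have s : ∀ a b c : ℤ, 0 < a → 0 < c → 0 < 4 * a * c - b ^ 2 →
      HasSum (fun p : {p : ℤ × ℤ // p ≠ 0} => qterm a b c p.1) (∑' v, qterm a b c v) := by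
    intro a b c ha hc hD
    rw [← sum_subtype]
    exact ((qterm_summable a b c ha hc hD).subtype {p : ℤ × ℤ | p ≠ 0}).hasSum
  have h := (((s 1 0 15 (by norm_num) (by norm_num) (by norm_num)).sub
    (s 3 0 5 (by norm_num) (by norm_num) (by norm_num))).add
    (s 2 1 2 (by norm_num) (by norm_num) (by norm_num))).sub
    (s 1 1 4 (by norm_num) (by norm_num) (by norm_num))
  have h' := (((qterm_hasSum 1 0 15 (by norm_num) (by norm_num) (by norm_num)).sub
    (qterm_hasSum 3 0 5 (by norm_num) (by norm_num) (by norm_num))).add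
    (qterm_hasSum 2 1 2 (by norm_num) (by norm_num) (by norm_num))).sub
    (qterm_hasSum 1 1 4 (by norm_num) (by norm_num) (by norm_num))
  have e := h'.unique (by
    refine hs_congr hasSum_diff (fun n => ?_)
    rw [aa, bb]; push_cast; ring)
  rw [← e, ← h.tsum_eq]
  refine tsum_congr fun p => ?_
  simp only [qterm, qf]
  push_cast
  simp

noncomputable def F3 (n : ℕ) : ℝ := (jacobiSym n 3 : ℝ) / (n : ℝ) ^ 2
noncomputable def F5 (n : ℕ) : ℝ := (jacobiSym n 5 : ℝ) / (n : ℝ) ^ 2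

lemma jac_norm (a : ℤ) (b : ℕ) : |(jacobiSym a b : ℝ)| ≤ 1 := by
  rcases jacobiSym.trichotomy a b with h | h | h <;> rw [h] <;> norm_num

lemma sumF (b : ℕ) : Summable (fun n : ℕ => ‖(jacobiSym n b : ℝ) / (n : ℝ) ^ 2‖) := by
  refine (Real.summable_one_div_nat_pow.2 (by norm_num : 1 < 2)).of_nonneg_of_le
    (fun n => norm_nonneg _) (fun n => ?_)
  rw [norm_div, Real.norm_eq_abs, norm_pow, Real.norm_natCast]
  gcongr
  exact jac_norm _ _

lemma SB_eq : SB = 2 * ((∑' n, F3 n) * ∑' n, F5 n) := by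
  have hs : Summable (fun z : ℕ × ℕ => F3 z.1 * F5 z.2) :=
    summable_mul_of_summable_norm (sumF 3) (sumF 5)
  have h0 : HasSum (fun z : ℕ × ℕ => F3 z.1 * F5 z.2) ((∑' n, F3 n) * ∑' n, F5 n) := by
    have e := tsum_mul_tsum_of_summable_norm (f := F3) (g := F5) (sumF 3) (sumF 5)
    rw [e]
    exact hs.hasSum
  have h := (h0.tsum_fiberwise (fun z => z.1 * z.2)).mul_left 2
  refine (hasSum_bb).unique (hs_congr h fun n => ?_)
  rcases Nat.eq_zero_or_pos n with rfl | hn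
  · have : ∀ z : ((fun z : ℕ × ℕ => z.1 * z.2) ⁻¹' {0}), F3 z.1.1 * F5 z.1.2 = 0 := by
      rintro ⟨⟨x, y⟩, hz⟩
      simp only [Set.mem_preimage, Set.mem_singleton_iff, mul_eq_zero] at hz
      rcases hz with rfl | rfl <;> simp [F3, F5]
    rw [tsum_congr this]
    simp
  · have hset : (fun z : ℕ × ℕ => z.1 * z.2) ⁻¹' {n} = ↑(n.divisorsAntidiagonal) := by
      ext ⟨x, y⟩
      simp [hn.ne']
    rw [hset]
    have e := Finset.tsum_subtype' n.divisorsAntidiagonal (fun z : ℕ × ℕ => F3 z.1 * F5 z.2)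
    rw [e, bb_eq n hn.ne', gg, Nat.sum_divisorsAntidiagonal (f := fun x y => F3 x * F5 y)]
    push_cast
    rw [mul_div_assoc, Finset.sum_div]
    congr 1
    refine Finset.sum_congr rfl fun d hd => ?_
    have hd' := Nat.dvd_of_mem_divisors hd
    obtain ⟨k, rfl⟩ := hd'
    have hd0 : 0 < d := Nat.pos_of_mul_pos_right hn
    rw [Nat.mul_div_cancel_left _ hd0]
    simp only [F3, F5]
    push_cast
    rw [Int.mul_ediv_cancel_left _ (by positivity), mul_pow]
    ring

lemma cos_diff (n : ℕ) : Real.cos (2 * Real.pi * n * (1 / 5)) - Real.cos (2 * Real.pi * n * (2 / 5)) =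
    √5 / 2 * (jacobiSym n 5 : ℝ) := by
  have s5 : √5 ^ 2 = 5 := Real.sq_sqrt (by norm_num)
  have c1 : Real.cos (2 * Real.pi / 5) = (√5 - 1) / 4 := by
    rw [show 2 * Real.pi / 5 = 2 * (Real.pi / 5) by ring, Real.cos_two_mul, Real.cos_pi_div_five]
    linear_combination s5 / 8
  have c2 : Real.cos (4 * Real.pi / 5) = -(1 + √5) / 4 := by
    rw [show 4 * Real.pi / 5 = Real.pi - Real.pi / 5 by ring, Real.cos_pi_sub, Real.cos_pi_div_five]
    ring
  have c3 : Real.cos (6 * Real.pi / 5) = -(1 + √5) / 4 := by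
    rw [show 6 * Real.pi / 5 = Real.pi / 5 + Real.pi by ring, Real.cos_add_pi, Real.cos_pi_div_five]
    ring
  have per : ∀ (x : ℝ) (k : ℕ), Real.cos (x + 2 * Real.pi * k) = Real.cos x := fun x k => by
    rw [show x + 2 * Real.pi * k = x + k * (2 * Real.pi) by ring, Real.cos_add_nat_mul_two_pi]
  have c4 : Real.cos (8 * Real.pi / 5) = (√5 - 1) / 4 := by
    rw [← c1, show 8 * Real.pi / 5 = 2 * Real.pi - 2 * Real.pi / 5 by ring, Real.cos_two_pi_sub]
  have c6 : Real.cos (12 * Real.pi / 5) = (√5 - 1) / 4 := by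
    rw [← c1, ← per (2 * Real.pi / 5) 1]; congr 1; push_cast; ring
  have c8 : Real.cos (16 * Real.pi / 5) = -(1 + √5) / 4 := by
    rw [← c3, ← per (6 * Real.pi / 5) 1]; congr 1; push_cast; ring
  have hdec : n = 5 * (n / 5) + n % 5 := (Nat.div_add_mod n 5).symm
  have hlt : n % 5 < 5 := Nat.mod_lt _ (by norm_num)
  rw [j5]
  have e5 : (n : ℤ) % 5 = ((n % 5 : ℕ) : ℤ) := by omega
  rw [e5]
  generalize n % 5 = r at *
  generalize n / 5 = q at *
  subst hdec
  have a1 : 2 * Real.pi * ((5 * q + r : ℕ) : ℝ) * (1 / 5) = 2 * Real.pi * r / 5 + 2 * Real.pi * q := by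
    push_cast; ring
  have a2 : 2 * Real.pi * ((5 * q + r : ℕ) : ℝ) * (2 / 5) = 4 * Real.pi * r / 5 + 2 * Real.pi * (2 * q : ℕ) := by
    push_cast; ring
  rw [a1, a2, per, per]
  interval_cases r
  · simp
  · norm_num [c1, c2]; ring
  · rw [show 2 * Real.pi * ((2 : ℕ) : ℝ) / 5 = 4 * Real.pi / 5 by push_cast; ring,
      show 4 * Real.pi * ((2 : ℕ) : ℝ) / 5 = 8 * Real.pi / 5 by push_cast; ring, c2, c4]
    norm_num; ring
  · rw [show 2 * Real.pi * ((3 : ℕ) : ℝ) / 5 = 6 * Real.pi / 5 by push_cast; ring,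
      show 4 * Real.pi * ((3 : ℕ) : ℝ) / 5 = 12 * Real.pi / 5 by push_cast; ring, c3, c6]
    norm_num; ring
  · rw [show 2 * Real.pi * ((4 : ℕ) : ℝ) / 5 = 8 * Real.pi / 5 by push_cast; ring,
      show 4 * Real.pi * ((4 : ℕ) : ℝ) / 5 = 16 * Real.pi / 5 by push_cast; ring, c4, c8]
    norm_num; ring

lemma L5 : √5 / 2 * ∑' n, F5 n = 2 * Real.pi ^ 2 / 25 := by
  have h1 := hasSum_one_div_nat_pow_mul_cos (k := 1) (by norm_num) (x := 1 / 5) (by constructor <;> norm_num)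
  have h2 := hasSum_one_div_nat_pow_mul_cos (k := 1) (by norm_num) (x := 2 / 5) (by constructor <;> norm_num)
  have h := h1.sub h2
  have hF : HasSum (fun n => √5 / 2 * F5 n) (√5 / 2 * ∑' n, F5 n) :=
    (Summable.of_norm (sumF 5)).hasSum.mul_left _
  have e := hF.unique (hs_congr h fun n => by
    rw [← mul_sub, cos_diff, F5]; ring)
  rw [e]
  have B2 : ∀ x : ℝ, (Polynomial.map (algebraMap ℚ ℝ) (Polynomial.bernoulli (2 * 1))).eval x = x ^ 2 - x + 1 / 6 := by
    intro x
    simp only [mul_one, Polynomial.bernoulli, Finset.sum_range_succ, Finset.sum_range_zero]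
    norm_num [bernoulli_eq_bernoulli'_of_ne_one, bernoulli_one, bernoulli'_two, Polynomial.eval_monomial]
    try ring
  rw [B2, B2]
  norm_num [Nat.factorial]
  ring

lemma F3_eq : ∑' n, F3 n = ∑' n : ℕ, chiNeg3 (n + 1) / ((n : ℝ) + 1) ^ 2 := by
  have hs : Summable F3 := Summable.of_norm (sumF 3)
  rw [hs.tsum_eq_zero_add]
  have : F3 0 = 0 := by simp [F3]
  rw [this, zero_add]
  refine tsum_congr fun n => ?_
  rw [F3, j3, chiNeg3]
  push_cast
  congr 1
  split_ifs <;> first | omega | norm_num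

/-- Proposition 3 of the paper: the Dirichlet part of the Mahler measure
equals `(8/5)·d₃`. -/
theorem dirichlet_part_eq :
    (6 * Real.sqrt 15 / Real.pi ^ 3) *
        (∑' p : {p : ℤ × ℤ // p ≠ 0},
          (1 / ((p.1.1 : ℝ) ^ 2 + 15 * (p.1.2 : ℝ) ^ 2) ^ 2 -
            1 / (3 * (p.1.1 : ℝ) ^ 2 + 5 * (p.1.2 : ℝ) ^ 2) ^ 2 +
            1 / (2 * (p.1.1 : ℝ) ^ 2 + (p.1.1 : ℝ) * (p.1.2 : ℝ) + 2 * (p.1.2 : ℝ) ^ 2) ^ 2 -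
            1 / ((p.1.1 : ℝ) ^ 2 + (p.1.1 : ℝ) * (p.1.2 : ℝ) + 4 * (p.1.2 : ℝ) ^ 2) ^ 2)) =
      (8 / 5) * d3 := by
  rw [lhs_eq, SB_eq, d3, F3_eq]
  have h5 := L5
  set L := ∑' n : ℕ, chiNeg3 (n + 1) / ((n : ℝ) + 1) ^ 2
  set M := ∑' n, F5 n
  have s15 : √15 = √3 * √5 := by
    rw [← Real.sqrt_mul (by norm_num)]; norm_num
  rw [s15]
  have hpi := Real.pi_ne_zero
  have hM : √5 * M = 4 * Real.pi ^ 2 / 25 := by linarith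
  have e : 6 * (√3 * √5) / Real.pi ^ 3 * (5 / 8 * (2 * (L * M))) =
      15 / 2 * √3 * L / Real.pi ^ 3 * (√5 * M) := by ring
  rw [e, hM]
  field_simp
  ring
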